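/- arXiv:1602.04261 — 4 statements merged into one kernel-verified Lean document; each statement's English description precedes it below -/
import Mathlib

section
/- Let n ≥ 1, let A₀ = -I_n, and let A₁ be the n×n real matrix with (A₁)_{i+1,i} = 1 for 1 ≤ i < n and all other entries zero. Then there exist diagonal positive definite real n×n matrices P₁ and Q₁ such that the 2n×2n block matrix Q̃₁ = [[P₁A₀ + A₀ᵀP₁ + Q₁, P₁A₁], [A₁ᵀP₁, -Q₁]] is negative definite. -/
/-!
Take `P₁ = Q₁ = diag(2⁻ⁱ)`. Writing a vector as `(y, z)` and `w = A₁ z`, the quadratic form is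
`∑ 2⁻ⁱ (-yᵢ² + 2 yᵢ wᵢ - zᵢ²)` (`quadForm_eq`). Since the weights halve from one index to the
next, `∑ 2⁻ⁱ wᵢ² ≤ (1/2) ∑ 2⁻ⁱ zᵢ²` (`weighted_shift_le`). With `2yw ≤ (3/4)y² + (4/3)w²` the form
is at most `-(1/4) ∑ 2⁻ⁱ yᵢ² - (1/3) ∑ 2⁻ⁱ zᵢ²`, which is negative unless `y = z = 0`.
-/

open Matrix

/-- `A₁`: the subdiagonal shift matrix with `1` on the first subdiagonal. -/
def subdiagMatrix (n : ℕ) : Matrix (Fin n) (Fin n) ℝ :=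
  fun i j => if (i : ℕ) = (j : ℕ) + 1 then 1 else 0

/-- The shift contracts the weighted energy `∑ 2⁻ⁱ zᵢ²` by a factor `1/2`: it moves the mass of
coordinate `i` to coordinate `i + 1`, whose weight is half as large, and drops the last one. -/
lemma weighted_shift_le (n : ℕ) (z : Fin n → ℝ) :
    ∑ i : Fin n, (1 / 2 : ℝ) ^ (i : ℕ) * ((subdiagMatrix n *ᵥ z) i) ^ 2 ≤
      1 / 2 * ∑ i : Fin n, (1 / 2 : ℝ) ^ (i : ℕ) * z i ^ 2 := by
  cases n with
  | zero => simp
  | succ m =>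
    have h0 : (subdiagMatrix (m + 1) *ᵥ z) 0 = 0 := by
      simp [Matrix.mulVec, dotProduct, subdiagMatrix]
    have hs : ∀ i : Fin m, (subdiagMatrix (m + 1) *ᵥ z) i.succ = z i.castSucc := by
      intro i
      have h : ∀ j : Fin (m + 1), ((i.succ : ℕ) = (j : ℕ) + 1) ↔ i.castSucc = j := by
        intro j
        simp [Fin.ext_iff]
      simp only [Matrix.mulVec, dotProduct, subdiagMatrix, h]
      simp
    rw [Fin.sum_univ_succ, Fin.sum_univ_castSucc (n := m), mul_add, Finset.mul_sum, h0]
    simp only [hs, Fin.val_succ, Fin.val_castSucc, pow_succ (1 / 2 : ℝ)]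
    have hlast : 0 ≤ 1 / 2 * ((1 / 2 : ℝ) ^ ((Fin.last m : Fin (m + 1)) : ℕ) *
        z (Fin.last m) ^ 2) := by positivity
    have hsum : ∑ i : Fin m, (1 / 2 : ℝ) ^ (i : ℕ) * (1 / 2) * z i.castSucc ^ 2 =
        ∑ i : Fin m, 1 / 2 * ((1 / 2 : ℝ) ^ (i : ℕ) * z i.castSucc ^ 2) :=
      Finset.sum_congr rfl fun i _ => by ring
    rw [hsum]
    linarith

/-- For `P₁ = Q₁ = diag p` the quadratic form of `Q̃₁` at `(y, z)` is
`-∑ pᵢ yᵢ² + 2 ∑ pᵢ yᵢ (A z)ᵢ - ∑ pᵢ zᵢ²`. -/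
lemma quadForm_eq {n : ℕ} (A : Matrix (Fin n) (Fin n) ℝ) (p : Fin n → ℝ)
    (x : Fin n ⊕ Fin n → ℝ) :
    x ⬝ᵥ (Matrix.fromBlocks
        (diagonal p * (-1 : Matrix (Fin n) (Fin n) ℝ) +
          (-1 : Matrix (Fin n) (Fin n) ℝ)ᵀ * diagonal p + diagonal p)
        (diagonal p * A) (Aᵀ * diagonal p) (-diagonal p)).mulVec x =
      ∑ i, p i * (-(x (.inl i)) ^ 2 + 2 * x (.inl i) * (A *ᵥ (x ∘ Sum.inr)) i
        - x (.inr i) ^ 2) := by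
  obtain ⟨y, z, rfl⟩ : ∃ y z : Fin n → ℝ, x = Sum.elim y z :=
    ⟨x ∘ Sum.inl, x ∘ Sum.inr, (Sum.elim_comp_inl_inr x).symm⟩
  have hA : z ⬝ᵥ ((Aᵀ * diagonal p) *ᵥ y) = ∑ i, p i * (y i * (A *ᵥ z) i) := by
    rw [← Matrix.mulVec_mulVec, Matrix.dotProduct_mulVec, Matrix.vecMul_transpose]
    simp only [dotProduct, Matrix.mulVec_diagonal]
    exact Finset.sum_congr rfl fun i _ => by ring
  have hB : y ⬝ᵥ ((diagonal p * A) *ᵥ z) = ∑ i, p i * (y i * (A *ᵥ z) i) := by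
    rw [← Matrix.mulVec_mulVec]
    simp only [dotProduct, Matrix.mulVec_diagonal]
    exact Finset.sum_congr rfl fun i _ => by ring
  have hD : ∀ v : Fin n → ℝ, v ⬝ᵥ (diagonal p *ᵥ v) = ∑ i, p i * v i ^ 2 := by
    intro v
    simp only [dotProduct, Matrix.mulVec_diagonal]
    exact Finset.sum_congr rfl fun i _ => by ring
  have h11 : diagonal p * (-1 : Matrix (Fin n) (Fin n) ℝ) +
      (-1 : Matrix (Fin n) (Fin n) ℝ)ᵀ * diagonal p + diagonal p = -diagonal p := by
    simp
  rw [h11, Matrix.fromBlocks_mulVec, sumElim_dotProduct_sumElim]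
  simp only [Sum.elim_comp_inl, Sum.elim_comp_inr, dotProduct_add, Matrix.neg_mulVec,
    dotProduct_neg, hA, hB, hD, Sum.elim_inl, Sum.elim_inr]
  simp only [← Finset.sum_neg_distrib, ← Finset.sum_add_distrib]
  exact Finset.sum_congr rfl fun i _ => by ring

/-- Feasibility of the LMI for delay-independent stability: with `A₀ = -I` and `A₁` the
subdiagonal shift matrix, there exist diagonal positive definite `P₁, Q₁` such that the
block matrix `Q̃₁ = [[P₁A₀ + A₀ᵀP₁ + Q₁, P₁A₁], [A₁ᵀP₁, -Q₁]]` is negative definite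
(its quadratic form is strictly negative on nonzero vectors). -/
theorem lyapunov_krasovskii_LMI_feasible (n : ℕ) (hn : 1 ≤ n) :
    ∃ P₁ Q₁ : Matrix (Fin n) (Fin n) ℝ,
      (∃ p : Fin n → ℝ, P₁ = Matrix.diagonal p) ∧ P₁.PosDef ∧
      (∃ q : Fin n → ℝ, Q₁ = Matrix.diagonal q) ∧ Q₁.PosDef ∧
      (∀ x : Fin n ⊕ Fin n → ℝ, x ≠ 0 →
        x ⬝ᵥ (Matrix.fromBlocks
          (P₁ * (-1 : Matrix (Fin n) (Fin n) ℝ) + (-1 : Matrix (Fin n) (Fin n) ℝ)ᵀ * P₁ + Q₁)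
          (P₁ * subdiagMatrix n)
          ((subdiagMatrix n)ᵀ * P₁)
          (-Q₁)).mulVec x < 0) := by
  have hpos : ∀ i : Fin n, 0 < (1 / 2 : ℝ) ^ (i : ℕ) := fun i => by positivity
  have hPD : (diagonal fun i : Fin n => (1 / 2 : ℝ) ^ (i : ℕ)).PosDef :=
    Matrix.PosDef.diagonal hpos
  refine ⟨_, _, ⟨_, rfl⟩, hPD, ⟨_, rfl⟩, hPD, fun x hx => ?_⟩
  rw [quadForm_eq]
  set w := subdiagMatrix n *ᵥ (x ∘ Sum.inr) with hw
  have hshift := weighted_shift_le n (x ∘ Sum.inr)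
  rw [← hw] at hshift
  simp only [Function.comp_apply] at hshift
  -- Young's inequality `2yw ≤ (3/4)y² + (4/3)w²`; the factor `4/3 < 2` is what the
  -- contraction factor `1/2` of the shift can absorb.
  have hyoung : ∑ i : Fin n, (1 / 2 : ℝ) ^ (i : ℕ) *
        (-(x (.inl i)) ^ 2 + 2 * x (.inl i) * w i - x (.inr i) ^ 2) ≤
      ∑ i : Fin n, (-(1 / 4) * ((1 / 2 : ℝ) ^ (i : ℕ) * x (.inl i) ^ 2) +
        4 / 3 * ((1 / 2 : ℝ) ^ (i : ℕ) * w i ^ 2) -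
        (1 / 2 : ℝ) ^ (i : ℕ) * x (.inr i) ^ 2) := by
    refine Finset.sum_le_sum fun i _ => ?_
    have h := mul_nonneg (hpos i).le (sq_nonneg (3 * x (.inl i) - 4 * w i))
    linarith
  rw [Finset.sum_sub_distrib, Finset.sum_add_distrib, ← Finset.mul_sum,
    ← Finset.mul_sum] at hyoung
  have hY : ∀ i ∈ Finset.univ, 0 ≤ (1 / 2 : ℝ) ^ ((i : Fin n) : ℕ) * x (.inl i) ^ 2 :=
    fun i _ => by positivity
  have hZ : ∀ i ∈ Finset.univ, 0 ≤ (1 / 2 : ℝ) ^ ((i : Fin n) : ℕ) * x (.inr i) ^ 2 :=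
    fun i _ => by positivity
  have hY0 := Finset.sum_nonneg hY
  have hZ0 := Finset.sum_nonneg hZ
  obtain ⟨k, hk⟩ := Function.ne_iff.mp hx
  simp only [Pi.zero_apply] at hk
  cases k with
  | inl k =>
    have h1 := Finset.single_le_sum hY (Finset.mem_univ k)
    have h2 : 0 < (1 / 2 : ℝ) ^ (k : ℕ) * x (.inl k) ^ 2 := by positivity
    linarith
  | inr k =>
    have h1 := Finset.single_le_sum hZ (Finset.mem_univ k)
    have h2 : 0 < (1 / 2 : ℝ) ^ (k : ℕ) * x (.inr k) ^ 2 := by positivity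
    linarith
end

section
/- Let n ≥ 1, A₀ = -I_n, and let A₁ be the n×n real matrix with (A₁)_{i+1,i} = 1 for 1 ≤ i < n and all other entries zero. Then for every fixed delay r ≥ 0, every continuous function y : ℝ → ℝⁿ that is differentiable on [0, ∞) and satisfies y'(τ) = A₀·y(τ) + A₁·y(τ - r) for all τ ≥ 0 converges to the zero vector as τ → ∞. That is, the equilibrium y = 0 of the delayed fast subsystem is asymptotically stable independently of the delay r. -/
/-!
The matrix `A₁` is strictly lower triangular, so the system is a cascade of scalar equations
`x' = -x + u`, where the input `u` of component `k + 1` is the delayed component `k`, and the input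
of component `0` vanishes. A scalar equation `x' = -x + u` maps vanishing inputs to
vanishing outputs (`tendsto_zero_of_hasDerivAt_neg_add`), and a delay does not affect
convergence at infinity, so induction on the component gives the result.
-/

open Filter Matrix

/-- One-sided comparison estimate: the function `exp t * (x t - ε)` is nonincreasing as soon as
`u ≤ ε`, hence `x t ≤ ε + O(exp (-t))`. -/
lemma eventually_lt_of_hasDerivAt_neg_add {x u : ℝ → ℝ}
    (hx : ∀ t, 0 ≤ t → HasDerivAt x (-x t + u t) t) {ε δ : ℝ} (hεδ : ε < δ)
    (hu : ∀ᶠ t in atTop, u t ≤ ε) : ∀ᶠ t in atTop, x t < δ := by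
  obtain ⟨T₀, hT₀⟩ := eventually_atTop.1 hu
  set T := max T₀ 0
  have hd : ∀ t, T ≤ t → HasDerivAt (fun s => Real.exp s * (x s - ε))
      (Real.exp t * (u t - ε)) t := by
    intro t ht
    have h := (Real.hasDerivAt_exp t).mul
      ((hx t ((le_max_right _ _).trans ht)).sub_const ε)
    refine h.congr_deriv ?_
    ring
  have hanti : AntitoneOn (fun s => Real.exp s * (x s - ε)) (Set.Ici T) := by
    refine antitoneOn_of_deriv_nonpos (convex_Ici T)
      (fun t ht => (hd t ht).continuousAt.continuousWithinAt)
      (fun t ht => (hd t (interior_subset ht)).differentiableAt.differentiableWithinAt) ?_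
    intro t ht
    have ht' : T ≤ t := interior_subset ht
    rw [(hd t ht').deriv]
    exact mul_nonpos_of_nonneg_of_nonpos (Real.exp_pos t).le
      (sub_nonpos.2 (hT₀ t ((le_max_left _ _).trans ht')))
  have hlim : Tendsto (fun t => Real.exp t * (δ - ε)) atTop atTop :=
    Real.tendsto_exp_atTop.atTop_mul_const (sub_pos.2 hεδ)
  filter_upwards [eventually_ge_atTop T,
    hlim.eventually_gt_atTop (Real.exp T * (x T - ε))] with t ht hlt
  have h1 : Real.exp t * (x t - ε) ≤ Real.exp T * (x T - ε) :=
    hanti Set.self_mem_Ici ht ht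
  have h2 := lt_of_mul_lt_mul_left (h1.trans_lt hlt) (Real.exp_pos t).le
  linarith

lemma tendsto_zero_of_hasDerivAt_neg_add {x u : ℝ → ℝ}
    (hx : ∀ t, 0 ≤ t → HasDerivAt x (-x t + u t) t) (hu : Tendsto u atTop (nhds 0)) :
    Tendsto x atTop (nhds 0) := by
  -- The lower bound is the upper bound for `-x`, which solves the equation with input `-u`.
  have hx' : ∀ t, 0 ≤ t → HasDerivAt (fun s => -x s) (-(-x t) + -u t) t := fun t ht =>
    (hx t ht).fun_neg.congr_deriv (by ring)
  refine tendsto_order.2 ⟨fun a ha => ?_, fun a ha => ?_⟩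
  · have := eventually_lt_of_hasDerivAt_neg_add (ε := -(a / 2)) (δ := -a) hx' (by linarith)
      ((hu.eventually_const_lt (show a / 2 < 0 by linarith)).mono fun t ht => by linarith)
    exact this.mono fun t ht => by linarith
  · exact eventually_lt_of_hasDerivAt_neg_add (ε := a / 2) hx (by linarith)
      ((hu.eventually_lt_const (show 0 < a / 2 by linarith)).mono fun t ht => ht.le)

lemma subdiagMatrix_mulVec_zero {n : ℕ} (h : 0 < n) (v : Fin n → ℝ) :
    (subdiagMatrix n).mulVec v ⟨0, h⟩ = 0 := by
  simp [subdiagMatrix, Matrix.mulVec, dotProduct]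

lemma subdiagMatrix_mulVec_succ {n k : ℕ} (h : k + 1 < n) (v : Fin n → ℝ) :
    (subdiagMatrix n).mulVec v ⟨k + 1, h⟩ = v ⟨k, by omega⟩ := by
  rw [Matrix.mulVec, dotProduct, Finset.sum_eq_single ⟨k, by omega⟩]
  · simp [subdiagMatrix]
  · intro j _ hj
    have : ¬ k = (j : ℕ) := fun e => hj (Fin.ext e.symm)
    simp [subdiagMatrix, this]
  · simp

/-- Delay-independent asymptotic stability of the delayed fast subsystem
`y'(τ) = A₀ y(τ) + A₁ y(τ - r)` with `A₀ = -I`: for every fixed delay `r ≥ 0`, every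
continuous solution (differentiable on `[0, ∞)`) converges to the zero vector. -/
theorem delayed_fast_subsystem_asymptotically_stable (n : ℕ) (hn : 1 ≤ n)
    (r : ℝ) (hr : 0 ≤ r) (y : ℝ → Fin n → ℝ) (hy : Continuous y)
    (hode : ∀ τ : ℝ, 0 ≤ τ →
      HasDerivAt y ((-1 : Matrix (Fin n) (Fin n) ℝ).mulVec (y τ) +
        (subdiagMatrix n).mulVec (y (τ - r))) τ) :
    Tendsto y atTop (nhds 0) := by
  have hcomp : ∀ i : Fin n, ∀ τ : ℝ, 0 ≤ τ → HasDerivAt (fun t => y t i)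
      (-y τ i + (subdiagMatrix n).mulVec (y (τ - r)) i) τ := by
    intro i τ hτ
    refine ((hasDerivAt_pi.1 (hode τ hτ)) i).congr_deriv ?_
    simp [Matrix.neg_mulVec]
  have hshift : Tendsto (fun t : ℝ => t - r) atTop atTop :=
    tendsto_atTop_add_const_right atTop (-r) tendsto_id
  have key : ∀ k (hk : k < n), Tendsto (fun t => y t ⟨k, hk⟩) atTop (nhds 0) := by
    intro k
    induction k with
    | zero =>
      intro hk
      refine tendsto_zero_of_hasDerivAt_neg_add (hcomp ⟨0, hk⟩) ?_
      simp only [subdiagMatrix_mulVec_zero]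
      exact tendsto_const_nhds
    | succ k ih =>
      intro hk
      refine tendsto_zero_of_hasDerivAt_neg_add (hcomp ⟨k + 1, hk⟩) ?_
      simp only [subdiagMatrix_mulVec_succ]
      exact (ih (by omega)).comp hshift
  exact tendsto_pi_nhds.2 fun i => key i i.isLt
end

section
/- Let n ≥ 1 and for ε > 0 define the (n+1)×(n+1) real matrix M(ε) by: its first row is (0, -1, -1, ..., -1); its second row has 1/ε in the first column, -1/ε in the second column, and zeros elsewhere; and for 3 ≤ k ≤ n+1 its k-th row has 1/ε in column k-1, -1/ε in column k, and zeros elsewhere. Then there exists ε* > 0 such that for every ε with 0 < ε < ε*, every complex eigenvalue of M(ε) has strictly negative real part (M(ε) is Hurwitz). -/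
/-!
Let `v` be an eigenvector of `M(ε)` for `μ` with `Re μ ≥ 0`, and put `u = (1 + ε μ)⁻¹`, so `‖u‖ ≤ 1`.
The follower rows read `(1 + ε μ) v_i = v_{i-1}`, hence `v_i = u ^ i v_0` and `v_0 ≠ 0`; the leader
row then becomes the characteristic equation `μ = -∑_{i=1}^n u ^ i`. It gives `‖μ‖ ≤ n`, so
`‖u - 1‖ ≤ ε n` and `‖u ^ i - 1‖ ≤ ε n ^ 2` for `i ≤ n`. When `ε < 1 / n ^ 2` every `u ^ i` has
positive real part, and the characteristic equation forces `Re μ < 0`, a contradiction.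
-/

/-- System matrix `M(ε)` of the full leader-follower consensus protocol in the state
`(ξ_h, z₁, ..., zₙ)`: first row `(0, -1, ..., -1)`; row `k ≥ 1` has `1/ε` in column
`k-1`, `-1/ε` in column `k`, and zeros elsewhere. -/
noncomputable def fullProtocolMatrix (n : ℕ) (ε : ℝ) : Matrix (Fin (n + 1)) (Fin (n + 1)) ℝ :=
  fun i j =>
    if (i : ℕ) = 0 then (if (j : ℕ) = 0 then 0 else -1)
    else if (j : ℕ) + 1 = (i : ℕ) then 1 / ε
    else if j = i then -1 / ε
    else 0

/-- The eigenvalue equation of `M(ε)`, read off row by row: leader row first, then the followers. -/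
theorem fullProtocolMatrix_eigen_rows (n : ℕ) (ε : ℝ) (μ : ℂ)
    (hμ : μ ∈ spectrum ℂ ((fullProtocolMatrix n ε).map Complex.ofReal)) :
    ∃ v : Fin (n + 1) → ℂ, v ≠ 0 ∧ μ * v 0 = -∑ i : Fin n, v i.succ ∧
      ∀ i : Fin n, μ * v i.succ = 1 / (ε : ℂ) * (v i.castSucc - v i.succ) := by
  rw [← Matrix.spectrum_toLin', ← Module.End.hasEigenvalue_iff_mem_spectrum] at hμ
  obtain ⟨v, hv⟩ := hμ.exists_hasEigenvector
  have hMv := hv.apply_eq_smul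
  rw [Matrix.toLin'_apply] at hMv
  refine ⟨v, hv.2, ?_, fun i => ?_⟩
  · have h := congrFun hMv 0
    simp only [Matrix.mulVec, dotProduct, Fin.sum_univ_succ, Matrix.map_apply,
      fullProtocolMatrix, Pi.smul_apply, smul_eq_mul] at h
    simpa using h.symm
  · have h := congrFun hMv i.succ
    have hrow : ∀ j : Fin (n + 1),
        ((fullProtocolMatrix n ε).map Complex.ofReal) i.succ j * v j =
          (if j = i.castSucc then 1 / (ε : ℂ) * v j else 0) +
            (if j = i.succ then -1 / (ε : ℂ) * v j else 0) := by
      intro j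
      by_cases h1 : j = i.castSucc
      · subst h1
        have h2 : i.castSucc ≠ i.succ := (Fin.castSucc_lt_succ).ne
        simp [fullProtocolMatrix, h2]
      · have h3 : (j : ℕ) ≠ i := fun h => h1 (Fin.ext h)
        by_cases h2 : j = i.succ
        · subst h2
          simp [fullProtocolMatrix, h1]
        · simp [fullProtocolMatrix, h1, h2, h3]
    simp only [Matrix.mulVec, dotProduct, hrow, Finset.sum_add_distrib,
      Finset.sum_ite_eq', Finset.mem_univ, if_true, Pi.smul_apply,
      smul_eq_mul] at h
    rw [← h]
    ring

theorem norm_pow_sub_one_le_of_norm_le_one {u : ℂ} (hu : ‖u‖ ≤ 1) (k : ℕ) :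
    ‖u ^ k - 1‖ ≤ k * ‖u - 1‖ := by
  induction k with
  | zero => simp
  | succ k ih =>
    have e : u ^ (k + 1) - 1 = u * (u ^ k - 1) + (u - 1) := by ring
    have h1 : ‖u * (u ^ k - 1)‖ ≤ ‖u ^ k - 1‖ := by
      rw [norm_mul]
      exact mul_le_of_le_one_left (norm_nonneg _) hu
    rw [e]
    push_cast
    linarith [norm_add_le (u * (u ^ k - 1)) (u - 1)]

/-- There is a bound `ε* > 0` such that for all `0 < ε < ε*`, every complex eigenvalue
of `M(ε)` has strictly negative real part, i.e. `M(ε)` is Hurwitz. -/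
theorem fullProtocolMatrix_hurwitz_for_small_eps (n : ℕ) (hn : 1 ≤ n) :
    ∃ εstar : ℝ, 0 < εstar ∧ ∀ ε : ℝ, 0 < ε → ε < εstar →
      ∀ μ ∈ spectrum ℂ ((fullProtocolMatrix n ε).map Complex.ofReal), μ.re < 0 := by
  have hn0 : (0 : ℝ) < n := by exact_mod_cast hn
  refine ⟨1 / (n : ℝ) ^ 2, by positivity, fun ε hε hεs μ hμ => ?_⟩
  rw [lt_div_iff₀ (by positivity)] at hεs
  by_contra! hre
  obtain ⟨v, hv0, hlead, hfol⟩ := fullProtocolMatrix_eigen_rows n ε μ hμ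
  have hεc : (ε : ℂ) ≠ 0 := by exact_mod_cast hε.ne'
  have hw : 1 ≤ ‖1 + (ε : ℂ) * μ‖ := by
    refine le_trans ?_ (Complex.re_le_norm _)
    simp
    positivity
  have hw0 : 1 + (ε : ℂ) * μ ≠ 0 := norm_pos_iff.1 (by linarith)
  obtain ⟨u, hu⟩ : ∃ u : ℂ, u = (1 + (ε : ℂ) * μ)⁻¹ := ⟨_, rfl⟩
  have huw : u * (1 + (ε : ℂ) * μ) = 1 := by rw [hu, inv_mul_cancel₀ hw0]
  have hu1 : ‖u‖ ≤ 1 := by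
    rw [hu, norm_inv]
    exact inv_le_one_of_one_le₀ hw
  have hpow : ∀ i : Fin (n + 1), v i = u ^ (i : ℕ) * v 0 := by
    intro i
    induction i using Fin.induction with
    | zero => simp
    | succ i ih =>
      have h := hfol i
      field_simp at h
      have h2 : v i.succ = u * v i.castSucc := by
        linear_combination u * h - v i.succ * huw
      rw [h2, ih]
      simp [pow_succ]
      ring
  have hv00 : v 0 ≠ 0 := by
    intro h
    apply hv0
    ext i
    simp [hpow i, h]
  have hchar : μ = -∑ i : Fin n, u ^ ((i : ℕ) + 1) := by
    apply mul_right_cancel₀ hv00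
    rw [hlead, neg_mul, Finset.sum_mul]
    congr 1
    exact Finset.sum_congr rfl fun i _ => by rw [hpow i.succ, Fin.val_succ]
  have hμn : ‖μ‖ ≤ n := by
    rw [hchar, norm_neg]
    refine (norm_sum_le _ _).trans ?_
    refine (Finset.sum_le_sum (g := fun _ => (1 : ℝ)) fun i _ => ?_).trans (by simp)
    rw [norm_pow]
    exact pow_le_one₀ (norm_nonneg _) hu1
  have hu_sub : ‖u - 1‖ ≤ ε * n := by
    have e : u - 1 = -(u * (ε * μ)) := by linear_combination huw
    rw [e, norm_neg, norm_mul, norm_mul, Complex.norm_of_nonneg hε.le]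
    calc ‖u‖ * (ε * ‖μ‖) ≤ 1 * (ε * n) := by gcongr
      _ = ε * n := one_mul _
  have hpos : ∀ i : Fin n, 0 < (u ^ ((i : ℕ) + 1)).re := by
    intro i
    have hi : (((i : ℕ) + 1 : ℕ) : ℝ) ≤ n := by exact_mod_cast i.isLt
    have h1 : ‖u ^ ((i : ℕ) + 1) - 1‖ ≤ n * (ε * n) :=
      (norm_pow_sub_one_le_of_norm_le_one hu1 _).trans (by gcongr)
    have h2 := (abs_le.1 (Complex.abs_re_le_norm (u ^ ((i : ℕ) + 1) - 1))).1
    rw [Complex.sub_re, Complex.one_re] at h2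
    nlinarith
  have hsum : 0 < ∑ i : Fin n, (u ^ ((i : ℕ) + 1)).re :=
    Finset.sum_pos (fun i _ => hpos i) ⟨⟨0, hn⟩, Finset.mem_univ _⟩
  have hre_eq := congrArg Complex.re hchar
  rw [Complex.neg_re, Complex.re_sum] at hre_eq
  linarith
end

section
/- Let n ≥ 1 and z* ∈ ℝ. There exists ε* > 0 such that for every ε with 0 < ε < ε*, every pair of differentiable functions ξ_h : ℝ → ℝ and z : ℝ → ℝⁿ satisfying dξ_h/dt = z* - Σ_{i=1}^n z_i(t), ε·dz_1/dt = -(z_1(t) - ξ_h(t)), and ε·dz_i/dt = -(z_i(t) - z_{i-1}(t)) for 2 ≤ i ≤ n and all t ≥ 0, converges to the unique equilibrium: ξ_h(t) → z*/n and z_i(t) → z*/n for every i as t → ∞. In particular Σ_{i=1}^n z_i(t) → z* and all consensus states asymptotically agree. -/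
open Filter

/-!
Shift to errors: with `β = z*/n`, put `x = ξ - β` and `eₖ = zₖ - ξ` (`e₀ = 0`). Then
`x' = -S` and `ε eₖ' = -(eₖ - eₖ₋₁) + ε S` with `S = n x + ∑ eₖ`. The fast chain is strictly
dissipative for a quadratic form with decreasing weights `wₖ = n + 1 - k`, since
`∑ wₖ eₖ (eₖ - eₖ₋₁) ≥ ½ ∑ eₖ²` (`half_sum_sq_le`). Hence
`V = x² + 4 n³ ε ∑ wₖ eₖ²` satisfies `V' ≤ -V/2` as soon as `ε ≤ 1 / (8 n⁴)`: the term
`-2 n x²` and the dissipation `-4 n³ ∑ eₖ²` absorb all cross terms (`lyapunov_deriv_le`).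
So `V` decays exponentially, which forces `x → 0` and every `eₖ → 0`.

The chain is indexed by `ℕ`, with the leader's auxiliary state at index `0` and `z_k` at
index `k`; sums over `Finset.range n` run over the entries `k + 1`.
-/

/-- Dissipation of the chain: summation by parts with the weights `n, n - 1, …, 1`. -/
lemma half_sum_sq_le (e : ℕ → ℝ) (h0 : e 0 = 0) (n : ℕ) :
    (∑ k ∈ Finset.range n, e (k + 1) ^ 2) / 2 ≤
      ∑ k ∈ Finset.range n, ((n : ℝ) - k) * (e (k + 1) * (e (k + 1) - e k)) := by
  -- Unweighted telescoping; it is the increment of the weighted sum from `m` to `m + 1`.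
  have h1 : ∀ m : ℕ, e m ^ 2 / 2 ≤ ∑ k ∈ Finset.range m, e (k + 1) * (e (k + 1) - e k) := by
    intro m
    induction m with
    | zero => simp [h0]
    | succ m ih =>
      rw [Finset.sum_range_succ]
      nlinarith [sq_nonneg (e (m + 1) - e m)]
  induction n with
  | zero => simp
  | succ m ih =>
    have h2 : ∑ k ∈ Finset.range (m + 1),
          (((m + 1 : ℕ) : ℝ) - k) * (e (k + 1) * (e (k + 1) - e k)) =
        ∑ k ∈ Finset.range m, ((m : ℝ) - k) * (e (k + 1) * (e (k + 1) - e k)) +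
        ∑ k ∈ Finset.range (m + 1), e (k + 1) * (e (k + 1) - e k) := by
      rw [Finset.sum_range_succ, Finset.sum_range_succ _ m, ← add_assoc,
        ← Finset.sum_add_distrib]
      congr 1
      · refine Finset.sum_congr rfl fun k _ => ?_
        push_cast
        ring
      · push_cast
        ring
    rw [h2, Finset.sum_range_succ]
    linarith [h1 (m + 1)]

/-- The quadratic inequality `V' ≤ -V/2`. The left side is the derivative of `V` along the
flow, with `δ = 4 n³ ε` the weight of the fast part. -/
lemma lyapunov_deriv_le (n : ℕ) (hn : 1 ≤ n) (δ x : ℝ) (hδ : 0 < δ)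
    (hδn : 2 * δ * n ≤ 1) (e : ℕ → ℝ) (h0 : e 0 = 0) :
    -2 * x * (n * x + ∑ k ∈ Finset.range n, e (k + 1))
      - 8 * n ^ 3 * ∑ k ∈ Finset.range n, ((n : ℝ) - k) * (e (k + 1) * (e (k + 1) - e k))
      + 2 * δ * (n * x + ∑ k ∈ Finset.range n, e (k + 1)) *
          ∑ k ∈ Finset.range n, ((n : ℝ) - k) * e (k + 1)
    ≤ -(1 / 2) * (x ^ 2 + δ * ∑ k ∈ Finset.range n, ((n : ℝ) - k) * e (k + 1) ^ 2) := by
  have hn' : (1 : ℝ) ≤ n := by exact_mod_cast hn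
  have hdiss := half_sum_sq_le e h0 n
  have hw : ∀ k ∈ Finset.range n, (0 : ℝ) ≤ (n : ℝ) - k ∧ (n : ℝ) - k ≤ n := by
    intro k hk
    have h : (k : ℝ) ≤ n := by exact_mod_cast (Finset.mem_range.mp hk).le
    exact ⟨by linarith, by linarith [k.cast_nonneg (α := ℝ)]⟩
  have hE : (∑ k ∈ Finset.range n, e (k + 1)) ^ 2 ≤
      n * ∑ k ∈ Finset.range n, e (k + 1) ^ 2 := by
    simpa using sq_sum_le_card_mul_sum_sq (s := Finset.range n) (f := fun k => e (k + 1))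
  have hW : (∑ k ∈ Finset.range n, ((n : ℝ) - k) * e (k + 1)) ^ 2 ≤
      n ^ 3 * ∑ k ∈ Finset.range n, e (k + 1) ^ 2 := by
    have h1 := sq_sum_le_card_mul_sum_sq (s := Finset.range n)
      (f := fun k : ℕ => ((n : ℝ) - k) * e (k + 1))
    rw [Finset.card_range] at h1
    have h2 : ∑ k ∈ Finset.range n, (((n : ℝ) - k) * e (k + 1)) ^ 2 ≤
        n ^ 2 * ∑ k ∈ Finset.range n, e (k + 1) ^ 2 := by
      rw [Finset.mul_sum]
      refine Finset.sum_le_sum fun k hk => ?_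
      rw [mul_pow]
      exact mul_le_mul_of_nonneg_right (pow_le_pow_left₀ (hw k hk).1 (hw k hk).2 2)
        (sq_nonneg _)
    calc _ ≤ _ := h1
      _ ≤ n * (n ^ 2 * ∑ k ∈ Finset.range n, e (k + 1) ^ 2) := by gcongr
      _ = _ := by ring
  have hP : ∑ k ∈ Finset.range n, ((n : ℝ) - k) * e (k + 1) ^ 2 ≤
      n * ∑ k ∈ Finset.range n, e (k + 1) ^ 2 := by
    rw [Finset.mul_sum]
    exact Finset.sum_le_sum fun k hk =>
      mul_le_mul_of_nonneg_right (hw k hk).2 (sq_nonneg _)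
  have hQ : 0 ≤ ∑ k ∈ Finset.range n, e (k + 1) ^ 2 :=
    Finset.sum_nonneg fun k _ => sq_nonneg _
  generalize ∑ k ∈ Finset.range n, e (k + 1) ^ 2 = Q at *
  generalize ∑ k ∈ Finset.range n, e (k + 1) = E at *
  generalize ∑ k ∈ Finset.range n, ((n : ℝ) - k) * e (k + 1) = W at *
  generalize ∑ k ∈ Finset.range n, ((n : ℝ) - k) * e (k + 1) ^ 2 = P at *
  generalize ∑ k ∈ Finset.range n, ((n : ℝ) - k) * (e (k + 1) * (e (k + 1) - e k)) = D at *
  generalize (n : ℝ) = N at *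
  have hN3 : N ≤ N ^ 3 := le_self_pow₀ hn' (by norm_num)
  have a1 : -2 * x * E ≤ x ^ 2 + E ^ 2 := by nlinarith [sq_nonneg (x + E)]
  have a2 : 2 * δ * N * (x * W) ≤ (x ^ 2 + W ^ 2) / 2 := by
    have h : x * W ≤ (x ^ 2 + W ^ 2) / 2 := by nlinarith [sq_nonneg (x - W)]
    have h' : 0 ≤ (x ^ 2 + W ^ 2) / 2 := by positivity
    have := mul_le_mul_of_nonneg_left h (by positivity : 0 ≤ 2 * δ * N)
    nlinarith
  have a3 : 2 * δ * (E * W) ≤ (E ^ 2 + W ^ 2) / 2 := by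
    have h : E * W ≤ (E ^ 2 + W ^ 2) / 2 := by nlinarith [sq_nonneg (E - W)]
    have h' : 0 ≤ (E ^ 2 + W ^ 2) / 2 := by positivity
    have h2 : 2 * δ ≤ 1 := by nlinarith
    have := mul_le_mul_of_nonneg_left h (by positivity : 0 ≤ 2 * δ)
    nlinarith
  have a4 : δ * P ≤ Q / 2 := by
    have := mul_le_mul_of_nonneg_left hP hδ.le
    nlinarith
  have a5 : 8 * N ^ 3 * D ≥ 4 * (N ^ 3 * Q) := by
    have := mul_le_mul_of_nonneg_left hdiss (by positivity : 0 ≤ 8 * N ^ 3)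
    nlinarith
  have a6 : N * Q ≤ N ^ 3 * Q := mul_le_mul_of_nonneg_right hN3 hQ
  have a7 : Q ≤ N * Q := le_mul_of_one_le_left hQ hn'
  have a8 : x ^ 2 ≤ N * x ^ 2 := le_mul_of_one_le_left (sq_nonneg x) hn'
  nlinarith

/-- A nonnegative function with `V' ≤ -V/2` on `t ≥ 0` tends to `0`. -/
lemma tendsto_zero_of_deriv_le (V V' : ℝ → ℝ) (hV : ∀ t, 0 ≤ t → HasDerivAt V (V' t) t)
    (hle : ∀ t, 0 ≤ t → V' t ≤ -(1 / 2) * V t) (hpos : ∀ t, 0 ≤ V t) :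
    Tendsto V atTop (nhds 0) := by
  have hd : ∀ t, 0 ≤ t → HasDerivAt (fun t => V t * Real.exp (t / 2))
      (V' t * Real.exp (t / 2) + V t * (Real.exp (t / 2) * (1 / 2))) t := fun t ht =>
    (hV t ht).mul ((hasDerivAt_id t).div_const 2).exp
  have hanti : AntitoneOn (fun t => V t * Real.exp (t / 2)) (Set.Ici 0) := by
    refine antitoneOn_of_deriv_nonpos (convex_Ici 0)
      (fun t ht => (hd t ht).continuousAt.continuousWithinAt)
      (fun t ht => ?_) (fun t ht => ?_)
    · exact (hd t (interior_subset ht)).differentiableAt.differentiableWithinAt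
    · have ht' : 0 ≤ t := interior_subset ht
      rw [(hd t ht').deriv]
      nlinarith [hle t ht', Real.exp_pos (t / 2)]
  have hlim : Tendsto (fun t : ℝ => V 0 * Real.exp (-(t / 2))) atTop (nhds 0) := by
    have h : Tendsto (fun t : ℝ => t / 2) atTop atTop :=
      tendsto_id.atTop_div_const (by norm_num)
    simpa using (Real.tendsto_exp_neg_atTop_nhds_zero.comp h).const_mul (V 0)
  refine squeeze_zero' (Eventually.of_forall hpos) ?_ hlim
  filter_upwards [eventually_ge_atTop 0] with t ht
  have h := hanti (Set.mem_Ici.mpr le_rfl) (Set.mem_Ici.mpr ht) ht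
  simp only [zero_div, Real.exp_zero, mul_one] at h
  rw [Real.exp_neg, ← div_eq_mul_inv, le_div_iff₀ (Real.exp_pos _)]
  exact h

/-- Convergence of the protocol with the states arranged as an `ℕ`-indexed chain whose entry
`0` is the leader's auxiliary state. -/
lemma chain_tendsto (n : ℕ) (hn : 1 ≤ n) (zs ε : ℝ) (hε : 0 < ε)
    (hεn : ε < 1 / (8 * (n : ℝ) ^ 4)) (y : ℕ → ℝ → ℝ)
    (h0 : ∀ t, 0 ≤ t →
      HasDerivAt (y 0) (zs - ∑ k ∈ Finset.range n, y (k + 1) t) t)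
    (hs : ∀ t, 0 ≤ t → ∀ k < n,
      HasDerivAt (y (k + 1)) (-(y (k + 1) t - y k t) / ε) t) :
    ∀ k ≤ n, Tendsto (y k) atTop (nhds (zs / n)) := by
  have hn' : (1 : ℝ) ≤ n := by exact_mod_cast hn
  have hn0 : (n : ℝ) ≠ 0 := by positivity
  set x : ℝ → ℝ := fun t => y 0 t - zs / n with hx
  set e : ℝ → ℕ → ℝ := fun t k => y k t - y 0 t with he
  set δ : ℝ := 4 * n ^ 3 * ε with hδ
  have hδ0 : 0 < δ := by positivity
  have hδn : 2 * δ * n ≤ 1 := by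
    rw [lt_div_iff₀ (by positivity)] at hεn
    rw [hδ]
    nlinarith
  have hw : ∀ k ∈ Finset.range n, (1 : ℝ) ≤ (n : ℝ) - k := by
    intro k hk
    have h : (k : ℝ) + 1 ≤ n := by exact_mod_cast Finset.mem_range.mp hk
    linarith
  have hS : ∀ t, zs - ∑ k ∈ Finset.range n, y (k + 1) t =
      -(n * x t + ∑ k ∈ Finset.range n, e t (k + 1)) := by
    intro t
    simp only [hx, he, Finset.sum_sub_distrib, Finset.sum_const, Finset.card_range,
      nsmul_eq_mul]
    field_simp
    ring
  set S : ℝ → ℝ := fun t => n * x t + ∑ k ∈ Finset.range n, e t (k + 1) with hSdef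
  have hdx : ∀ t, 0 ≤ t → HasDerivAt x (-S t) t := fun t ht => by
    have := (h0 t ht).sub_const (zs / n)
    rwa [hS t] at this
  have hde : ∀ t, 0 ≤ t → ∀ k ∈ Finset.range n,
      HasDerivAt (fun t => e t (k + 1)) (-(e t (k + 1) - e t k) / ε + S t) t := by
    intro t ht k hk
    have h := (hs t ht k (Finset.mem_range.mp hk)).sub (h0 t ht)
    rw [hS t] at h
    have heq : -(e t (k + 1) - e t k) / ε + S t =
        -(y (k + 1) t - y k t) / ε - -S t := by
      simp only [he]
      ring
    rw [heq]
    exact h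
  set V : ℝ → ℝ := fun t => x t ^ 2 +
    δ * ∑ k ∈ Finset.range n, ((n : ℝ) - k) * e t (k + 1) ^ 2 with hVdef
  have hterm : ∀ t, ∀ k ∈ Finset.range n, 0 ≤ ((n : ℝ) - k) * e t (k + 1) ^ 2 :=
    fun t k hk => mul_nonneg (by linarith [hw k hk]) (sq_nonneg _)
  have hV0 : Tendsto V atTop (nhds 0) := by
    refine tendsto_zero_of_deriv_le V (fun t => 2 * x t * (-S t) +
      δ * ∑ k ∈ Finset.range n, ((n : ℝ) - k) *
        (2 * e t (k + 1) * (-(e t (k + 1) - e t k) / ε + S t))) ?_ ?_ ?_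
    · intro t ht
      refine HasDerivAt.add ?_ (HasDerivAt.const_mul _ (HasDerivAt.fun_sum fun k hk =>
        HasDerivAt.const_mul _ ?_))
      · simpa using (hdx t ht).fun_pow 2
      · simpa using (hde t ht k hk).fun_pow 2
    · intro t ht
      refine le_trans (le_of_eq ?_)
        (lyapunov_deriv_le n hn δ (x t) hδ0 hδn (e t) (by simp [he]))
      have h1 : ∑ k ∈ Finset.range n, ((n : ℝ) - k) *
            (2 * e t (k + 1) * (-(e t (k + 1) - e t k) / ε + S t)) =
          -(2 / ε) * ∑ k ∈ Finset.range n,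
            ((n : ℝ) - k) * (e t (k + 1) * (e t (k + 1) - e t k)) +
          2 * S t * ∑ k ∈ Finset.range n, ((n : ℝ) - k) * e t (k + 1) := by
        rw [Finset.mul_sum, Finset.mul_sum, ← Finset.sum_add_distrib]
        refine Finset.sum_congr rfl fun k _ => ?_
        ring
      have h2 : δ * (2 / ε) = 8 * n ^ 3 := by
        rw [hδ]
        field_simp
        norm_num
      have hSt : n * x t + ∑ k ∈ Finset.range n, e t (k + 1) = S t := rfl
      simp only [h1, hSt]
      rw [← h2]
      ring
    · intro t
      exact add_nonneg (sq_nonneg _) (mul_nonneg hδ0.le (Finset.sum_nonneg (hterm t)))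
  have tendsto_of_sq : ∀ f : ℝ → ℝ, Tendsto (fun t => f t ^ 2) atTop (nhds 0) →
      Tendsto f atTop (nhds 0) := by
    intro f hf
    have h := hf.sqrt
    simp only [Real.sqrt_sq_eq_abs, Real.sqrt_zero] at h
    exact (tendsto_zero_iff_abs_tendsto_zero f).mpr h
  have hx0 : Tendsto x atTop (nhds 0) := by
    refine tendsto_of_sq x (squeeze_zero (fun t => sq_nonneg _) (fun t => ?_) hV0)
    exact le_add_of_nonneg_right (mul_nonneg hδ0.le (Finset.sum_nonneg (hterm t)))
  have hy0 : Tendsto (y 0) atTop (nhds (zs / n)) := by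
    simpa [hx] using hx0.add_const (zs / n)
  intro k hk
  rcases k with _ | k
  · exact hy0
  have hk' : k ∈ Finset.range n := Finset.mem_range.mpr hk
  have hek : Tendsto (fun t => e t (k + 1)) atTop (nhds 0) := by
    refine tendsto_of_sq _ (squeeze_zero (fun t => sq_nonneg _) (fun t => ?_)
      (by simpa using hV0.div_const δ))
    rw [le_div_iff₀ hδ0]
    have h1 := Finset.single_le_sum (hterm t) hk'
    have h2 : e t (k + 1) ^ 2 ≤ ((n : ℝ) - k) * e t (k + 1) ^ 2 :=
      le_mul_of_one_le_left (sq_nonneg _) (hw k hk')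
    have h3 := mul_le_mul_of_nonneg_left (h2.trans h1) hδ0.le
    simp only [hVdef]
    nlinarith [sq_nonneg (x t)]
  simpa [he] using hek.add hy0

/-- Asymptotic stability of the full leader-follower consensus protocol for sufficiently
strong time-scale separation: there is `ε* > 0` such that for every `0 < ε < ε*`, every
differentiable solution of `ξ_h' = z* - Σᵢ zᵢ`, `ε z₁' = -(z₁ - ξ_h)`,
`ε zᵢ' = -(zᵢ - z_{i-1})` (2 ≤ i ≤ n) on `t ≥ 0` converges to the unique equilibrium:
`ξ_h → z*/n`, `zᵢ → z*/n` for all `i`, and in particular `Σᵢ zᵢ → z*`. -/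
theorem full_protocol_converges_for_small_eps (n : ℕ) (hn : 1 ≤ n) (zs : ℝ) :
    ∃ εstar : ℝ, 0 < εstar ∧ ∀ ε : ℝ, 0 < ε → ε < εstar →
      ∀ (ξ : ℝ → ℝ) (z : ℝ → Fin n → ℝ),
        Differentiable ℝ ξ → (∀ i, Differentiable ℝ fun t => z t i) →
        (∀ t : ℝ, 0 ≤ t → deriv ξ t = zs - ∑ i, z t i) →
        (∀ (t : ℝ), 0 ≤ t → ∀ (i : Fin n),
          ε * deriv (fun s => z s i) t =
            -(z t i - if (i : ℕ) = 0 then ξ t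
                      else z t ⟨(i : ℕ) - 1, Nat.lt_of_le_of_lt (Nat.sub_le _ _) i.isLt⟩)) →
        Tendsto ξ atTop (nhds (zs / n)) ∧
        (∀ i : Fin n, Tendsto (fun t => z t i) atTop (nhds (zs / n))) ∧
        Tendsto (fun t => ∑ i, z t i) atTop (nhds zs) := by
  have hn' : (1 : ℝ) ≤ n := by exact_mod_cast hn
  refine ⟨1 / (8 * (n : ℝ) ^ 4), by positivity, ?_⟩
  intro ε hε hεn ξ z hξ hz hdξ hdz
  let y : ℕ → ℝ → ℝ := fun k t =>
    match k with
    | 0 => ξ t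
    | k + 1 => if h : k < n then z t ⟨k, h⟩ else 0
  have hy : ∀ i : Fin n, y (i + 1) = fun t => z t i := by
    intro i
    funext t
    simp [y]
  have hsum : ∀ t, ∑ k ∈ Finset.range n, y (k + 1) t = ∑ i, z t i := by
    intro t
    rw [← Fin.sum_univ_eq_sum_range (fun k => y (k + 1) t)]
    exact Finset.sum_congr rfl fun i _ => congrFun (hy i) t
  have key := chain_tendsto n hn zs ε hε hεn y ?_ ?_
  · have hzi : ∀ i : Fin n, Tendsto (fun t => z t i) atTop (nhds (zs / n)) := fun i => by
      simpa only [hy i] using key (i + 1) i.isLt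
    refine ⟨key 0 (Nat.zero_le n), hzi, ?_⟩
    have h := tendsto_finsetSum Finset.univ fun i _ => hzi i
    have hn0 : (n : ℝ) ≠ 0 := by positivity
    simpa [mul_div_cancel₀ _ hn0] using h
  · intro t ht
    rw [hsum, ← hdξ t ht]
    exact (hξ t).hasDerivAt
  · intro t ht k hk
    have h1 := hdz t ht ⟨k, hk⟩
    have h2 : (if k = 0 then ξ t
        else z t ⟨k - 1, Nat.lt_of_le_of_lt (Nat.sub_le _ _) hk⟩) = y k t := by
      rcases k with _ | k
      · simp [y]
      · simp [y, Nat.lt_of_succ_lt hk]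
    have h3 : y (k + 1) = fun t => z t ⟨k, hk⟩ := hy ⟨k, hk⟩
    have h4 : -(y (k + 1) t - y k t) / ε = deriv (fun s => z s ⟨k, hk⟩) t := by
      rw [div_eq_iff hε.ne', mul_comm, h1, ← h2, h3]
    rw [h4, h3]
    exact (hz ⟨k, hk⟩ t).hasDerivAt
end
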